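/- Let n = max(k, m) ≥ 3, let W be an m×k random matrix distributed according to the SUO distribution, and let z, z' ∈ ℝ^k. Let R be a k×k orthogonal matrix mapping z and z' into the span of the first two standard basis vectors, and set (v, v') = (Rz, Rz'). Then (Wz, Wz') has the same joint distribution as (Vv, Vv'), where V = √(n/k)·M₀ and M₀ is the top-left m×k submatrix of a random matrix M distributed according to the Haar measure on SO(n). -/

import Mathlib

open MeasureTheory ProbabilityTheory Matrix Kronecker
open scoped ENNReal NNReal

noncomputable section

instance {m n : Type*} : MeasurableSpace (Matrix m n ℝ) :=
  show MeasurableSpace (m → n → ℝ) from inferInstance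

/-- `μ` is the Haar probability measure on the group `O(n)` of `n × n` real orthogonal
matrices: it is a probability measure, it is supported on orthogonal matrices, and it is
invariant under (left) translation by any orthogonal matrix. -/
def IsHaarO (n : ℕ) (μ : Measure (Matrix (Fin n) (Fin n) ℝ)) : Prop :=
  IsProbabilityMeasure μ ∧
  (∀ᵐ M ∂μ, Mᵀ * M = 1) ∧
  ∀ Q : Matrix (Fin n) (Fin n) ℝ, Qᵀ * Q = 1 → μ.map (fun M => Q * M) = μ

/-- `μ` is the Haar probability measure on `SO(n)`: a probability measure supported on
orthogonal matrices of determinant one, invariant under left translation by `SO(n)`. -/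
def IsHaarSO (n : ℕ) (μ : Measure (Matrix (Fin n) (Fin n) ℝ)) : Prop :=
  IsProbabilityMeasure μ ∧
  (∀ᵐ M ∂μ, Mᵀ * M = 1 ∧ M.det = 1) ∧
  ∀ Q : Matrix (Fin n) (Fin n) ℝ, Qᵀ * Q = 1 → Q.det = 1 →
    μ.map (fun M => Q * M) = μ

/-- The map taking an `n × n` matrix to `√(n/k)` times its top-left `m × k` submatrix. -/
def suoOfHaar {m k n : ℕ} (hm : m ≤ n) (hk : k ≤ n)
    (M : Matrix (Fin n) (Fin n) ℝ) : Matrix (Fin m) (Fin k) ℝ :=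
  Real.sqrt ((n : ℝ) / (k : ℝ)) • M.submatrix (Fin.castLE hm) (Fin.castLE hk)

/-- `ν` is the scaled-corrected uniform orthogonal (SUO) distribution on `m × k` matrices:
the law of `√(n/k) • W₀` where `n = max k m` and `W₀` is the top-left `m × k` submatrix of
a Haar-distributed `n × n` orthogonal matrix. -/
def IsSUO (m k : ℕ) (ν : Measure (Matrix (Fin m) (Fin k) ℝ)) : Prop :=
  ∃ μ : Measure (Matrix (Fin (max k m)) (Fin (max k m)) ℝ),
    IsHaarO (max k m) μ ∧
    ν = μ.map (suoOfHaar (le_max_right k m) (le_max_left k m))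

/-- The kernel function `κ_f(z, z') = (1/m) f(z)ᵀ f(z')` of the combined layer
`f(z) = φ(W z)`, with `φ` applied elementwise. -/
def kernelF {m k : ℕ} (φ : ℝ → ℝ) (W : Matrix (Fin m) (Fin k) ℝ)
    (z z' : Fin k → ℝ) : ℝ :=
  (∑ i, φ (W.mulVec z i) * φ (W.mulVec z' i)) / (m : ℝ)

/-- The input covariance matrix `Σ_{z,z'} = (1/k) [[zᵀz, zᵀz'], [z'ᵀz, z'ᵀz']]`. -/
def covMat {k : ℕ} (z z' : Fin k → ℝ) : Matrix (Fin 2) (Fin 2) ℝ :=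
  (k : ℝ)⁻¹ • !![z ⬝ᵥ z, z ⬝ᵥ z'; z' ⬝ᵥ z, z' ⬝ᵥ z']

/-- The approximate kernel function `κ̃_f(Σ) = E_{u ∼ N(0, Σ)}[φ(u₁) φ(u₂)]`, realized by
pushing a pair of independent standard Gaussians through the Cholesky factor of `Σ`. -/
def approxKernel (φ : ℝ → ℝ) (S : Matrix (Fin 2) (Fin 2) ℝ) : ℝ :=
  ∫ p : ℝ × ℝ,
      φ (Real.sqrt (S 0 0) * p.1) *
      φ ((S 1 0 / Real.sqrt (S 0 0)) * p.1 +
          Real.sqrt (S 1 1 - (S 1 0) ^ 2 / S 0 0) * p.2)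
    ∂((gaussianReal 0 1).prod (gaussianReal 0 1))

/-- `γ` is the law of a centered (jointly) Gaussian random vector indexed by `ι` with
covariance matrix `A`: every linear functional of it is a centered real Gaussian with the
corresponding variance. -/
def IsGaussianLaw {ι : Type*} [Fintype ι] (A : Matrix ι ι ℝ)
    (γ : Measure (ι → ℝ)) : Prop :=
  IsProbabilityMeasure γ ∧
  ∀ l : ι → ℝ,
    γ.map (fun y => ∑ i, l i * y i) =
      gaussianReal 0 (Real.toNNReal (∑ i, ∑ j, l i * A i j * l j))

/-- The Frobenius (Hilbert–Schmidt) norm of a matrix. -/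
def frobNorm {m n : ℕ} (M : Matrix (Fin m) (Fin n) ℝ) : ℝ :=
  Real.sqrt (∑ i, ∑ j, (M i j) ^ 2)

/-- The `ℓ²` operator norm of a square matrix. -/
def opNorm {d : ℕ} (A : Matrix (Fin d) (Fin d) ℝ) : ℝ :=
  ‖Matrix.toEuclideanCLM (𝕜 := ℝ) A‖

end

/-!
If `F Q M`, for independent `Q` and `M`, has the law `ρ₁` given almost every `Q` and the law `ρ₂`
given almost every `M`, then `ρ₁ = ρ₂`. Applied to `Qᵀ * M`, this turns left invariance into right
invariance. Hence `W * R` has the same law as `W`, and `z, z'` may be replaced by `R z, R z'`.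
Padded by zeros to length `n`, these vectors have a vanishing coordinate, so the reflection `D` in
that coordinate fixes them. For orthogonal `M`, either `M` or `M * D` has determinant one.
Averaging over `Q * M`, with `Q` special orthogonal and `M` orthogonal, then shows that the two Haar
measures give the same law to every function unchanged under `M ↦ M * D`.
-/

section Fubini

variable {α β γ : Type*} [MeasurableSpace α] [MeasurableSpace β] [MeasurableSpace γ]

theorem map_prod_eq_of_ae_map_eq {μ : Measure α} {ν : Measure β} {ρ : Measure γ}
    [IsProbabilityMeasure μ] [SFinite ν] {F : α → β → γ}
    (hF : Measurable fun p : α × β => F p.1 p.2) (h : ∀ᵐ a ∂μ, ν.map (F a) = ρ) :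
    (μ.prod ν).map (fun p => F p.1 p.2) = ρ := by
  obtain ⟨a, rfl⟩ := h.exists
  exact (measurePreserving_snd.comp ((MeasurePreserving.id μ).skew_product hF h)).map_eq

theorem eq_of_ae_map_eq_of_ae_map_eq {μ : Measure α} {ν : Measure β} {ρ₁ ρ₂ : Measure γ}
    [IsProbabilityMeasure μ] [IsProbabilityMeasure ν] {F : α → β → γ}
    (hF : Measurable fun p : α × β => F p.1 p.2) (h₁ : ∀ᵐ a ∂μ, ν.map (F a) = ρ₁)
    (h₂ : ∀ᵐ b ∂ν, μ.map (fun a => F a b) = ρ₂) : ρ₁ = ρ₂ := by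
  have hswap : Measurable fun p : β × α => F p.2 p.1 := hF.comp measurable_swap
  rw [← map_prod_eq_of_ae_map_eq hF h₁, ← map_prod_eq_of_ae_map_eq hswap h₂,
    ← Measure.prod_swap, Measure.map_map hF measurable_swap]
  rfl

end Fubini

section Measurability

variable {α l m n : Type*} [MeasurableSpace α]

@[fun_prop]
theorem measurable_matrix_transpose : Measurable (transpose : Matrix l m ℝ → Matrix m l ℝ) :=
  measurable_pi_lambda _ fun j => measurable_pi_lambda _ fun i =>
    (measurable_pi_apply j).comp (measurable_pi_apply i)

variable [Fintype m]

@[fun_prop]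
theorem measurable_matrix_mul {f : α → Matrix l m ℝ} {g : α → Matrix m n ℝ}
    (hf : Measurable f) (hg : Measurable g) : Measurable fun a => f a * g a := by
  refine measurable_pi_lambda _ fun i => measurable_pi_lambda _ fun j => ?_
  exact Finset.measurable_sum _ fun x _ =>
    ((measurable_pi_apply x).comp ((measurable_pi_apply i).comp hf)).mul
      ((measurable_pi_apply j).comp ((measurable_pi_apply x).comp hg))

@[fun_prop]
theorem measurable_matrix_mulVec {f : α → Matrix l m ℝ} {g : α → m → ℝ}
    (hf : Measurable f) (hg : Measurable g) : Measurable fun a => f a *ᵥ g a := by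
  refine measurable_pi_lambda _ fun i => ?_
  exact Finset.measurable_sum _ fun x _ =>
    ((measurable_pi_apply x).comp ((measurable_pi_apply i).comp hf)).mul
      ((measurable_pi_apply x).comp hg)

end Measurability

section Invariance

variable {n : Type*} [Fintype n] {μ : Measure (Matrix n n ℝ)} [IsProbabilityMeasure μ]

theorem map_transpose_eq_self (hμ : ∀ᵐ Q ∂μ, μ.map (fun M => Qᵀ * M) = μ) :
    μ.map transpose = μ := by
  symm
  refine eq_of_ae_map_eq_of_ae_map_eq (F := fun Q M => Qᵀ * M) (by fun_prop) hμ ?_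
  filter_upwards [hμ] with M hM
  calc μ.map (fun Q => Qᵀ * M)
      = (μ.map (fun Q => Mᵀ * Q)).map transpose := by
        rw [Measure.map_map (by fun_prop) (by fun_prop)]
        simp only [Function.comp_def, transpose_mul, transpose_transpose]
    _ = μ.map transpose := by rw [hM]

theorem map_mul_right_eq_self (hμ : ∀ᵐ Q ∂μ, μ.map (fun M => Qᵀ * M) = μ) {P : Matrix n n ℝ}
    (hP : μ.map (fun M => Pᵀ * M) = μ) : μ.map (fun M => M * P) = μ :=
  calc μ.map (fun M => M * P)
      = ((μ.map transpose).map (fun M => Pᵀ * M)).map transpose := by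
        rw [Measure.map_map (by fun_prop) (by fun_prop),
          Measure.map_map (by fun_prop) (by fun_prop)]
        simp only [Function.comp_def, transpose_mul, transpose_transpose]
    _ = μ := by rw [map_transpose_eq_self hμ, hP, map_transpose_eq_self hμ]

end Invariance

section Orthogonal

variable {n R : Type*} [Fintype n] [DecidableEq n] [CommRing R]

theorem mem_specialOrthogonalGroup_or_mul_mem [NoZeroDivisors R] {M D : Matrix n n R}
    (hM : M ∈ orthogonalGroup n R) (hD : D ∈ orthogonalGroup n R) (hdet : D.det = -1) :
    M ∈ specialOrthogonalGroup n R ∨ M * D ∈ specialOrthogonalGroup n R := by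
  have hsq : M.det * M.det = 1 := by
    simpa using congrArg det ((mem_orthogonalGroup_iff _ _).mp hM)
  rcases mul_self_eq_one_iff.mp hsq with h | h
  · exact .inl (mem_specialOrthogonalGroup_iff.mpr ⟨hM, h⟩)
  · exact .inr (mem_specialOrthogonalGroup_iff.mpr
      ⟨mul_mem hM hD, by rw [det_mul, h, hdet, neg_mul_neg, one_mul]⟩)

/-- The matrix of the reflection of `Rⁿ` that changes the sign of the `i`-th coordinate. -/
def coordReflection {n R : Type*} [DecidableEq n] [CommRing R] (i : n) : Matrix n n R :=
  diagonal (Function.update 1 i (-1))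

theorem coordReflection_mem_orthogonalGroup (i : n) :
    coordReflection i ∈ orthogonalGroup n R := by
  rw [mem_orthogonalGroup_iff, coordReflection, diagonal_transpose, diagonal_mul_diagonal,
    ← diagonal_one]
  congr 1
  ext j
  obtain rfl | hj := eq_or_ne j i <;> simp [*]

theorem det_coordReflection (i : n) : (coordReflection i : Matrix n n R).det = -1 := by
  simp [coordReflection, Finset.prod_update_of_mem]

end Orthogonal

section Haar

variable {n : ℕ} {μ μO : Measure (Matrix (Fin n) (Fin n) ℝ)}

theorem IsHaarO.map_mul_right (hμ : IsHaarO n μ) {P : Matrix (Fin n) (Fin n) ℝ}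
    (hP : P ∈ orthogonalGroup (Fin n) ℝ) : μ.map (fun M => M * P) = μ := by
  obtain ⟨_, horth, hleft⟩ := hμ
  have hleftT {Q : Matrix (Fin n) (Fin n) ℝ} (hQ : Q ∈ orthogonalGroup (Fin n) ℝ) :
      μ.map (fun M => Qᵀ * M) = μ :=
    hleft Qᵀ (by rw [transpose_transpose]; exact (mem_orthogonalGroup_iff _ _).mp hQ)
  refine map_mul_right_eq_self ?_ (hleftT hP)
  filter_upwards [horth] with Q hQ using hleftT ((mem_orthogonalGroup_iff' _ _).mpr hQ)

theorem IsHaarSO.map_mul_right (hμ : IsHaarSO n μ) {P : Matrix (Fin n) (Fin n) ℝ}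
    (hP : P ∈ specialOrthogonalGroup (Fin n) ℝ) : μ.map (fun M => M * P) = μ := by
  obtain ⟨_, horth, hleft⟩ := hμ
  have hleftT {Q : Matrix (Fin n) (Fin n) ℝ} (hQ : Q ∈ specialOrthogonalGroup (Fin n) ℝ) :
      μ.map (fun M => Qᵀ * M) = μ := by
    obtain ⟨hQorth, hQdet⟩ := mem_specialOrthogonalGroup_iff.mp hQ
    refine hleft Qᵀ ?_ (by rw [det_transpose, hQdet])
    rw [transpose_transpose, (mem_orthogonalGroup_iff _ _).mp hQorth]
  refine map_mul_right_eq_self ?_ (hleftT hP)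
  filter_upwards [horth] with Q hQ
  exact hleftT (mem_specialOrthogonalGroup_iff.mpr ⟨(mem_orthogonalGroup_iff' _ _).mpr hQ.1, hQ.2⟩)

theorem IsHaarO.map_eq_map_of_isHaarSO {γ : Type*} [MeasurableSpace γ] (hμO : IsHaarO n μO)
    (hμ : IsHaarSO n μ) {f : Matrix (Fin n) (Fin n) ℝ → γ} (hf : Measurable f)
    {D : Matrix (Fin n) (Fin n) ℝ} (hD : D ∈ orthogonalGroup (Fin n) ℝ) (hdet : D.det = -1)
    (hfD : ∀ M, f (M * D) = f M) : μO.map f = μ.map f := by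
  have := hμO.1
  have := hμ.1
  refine eq_of_ae_map_eq_of_ae_map_eq (μ := μ) (ν := μO) (F := fun Q M => f (Q * M))
    (by fun_prop) ?_ ?_
  · filter_upwards [hμ.2.1] with Q hQ
    have hleft := congrArg (Measure.map f) (hμO.2.2 Q hQ.1)
    rwa [Measure.map_map hf (by fun_prop)] at hleft
  · have map_mul_right {P : Matrix (Fin n) (Fin n) ℝ}
        (hP : P ∈ specialOrthogonalGroup (Fin n) ℝ) : μ.map (fun Q => f (Q * P)) = μ.map f := by
      have hright := congrArg (Measure.map f) (hμ.map_mul_right hP)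
      rwa [Measure.map_map hf (by fun_prop)] at hright
    filter_upwards [hμO.2.1] with M hM
    rcases mem_specialOrthogonalGroup_or_mul_mem ((mem_orthogonalGroup_iff' _ _).mpr hM) hD hdet
      with hM | hMD
    · exact map_mul_right hM
    · simpa only [← Matrix.mul_assoc, hfD] using map_mul_right hMD

end Haar

section SUO

variable {m k n : ℕ} (hm : m ≤ n) (hk : k ≤ n)

@[fun_prop]
theorem measurable_suoOfHaar : Measurable (suoOfHaar hm hk) :=
  measurable_pi_lambda _ fun i => measurable_pi_lambda _ fun j =>
    measurable_const.mul ((measurable_pi_apply (Fin.castLE hk j)).comp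
      (measurable_pi_apply (Fin.castLE hm i)))

theorem suoOfHaar_mul_coordReflection_mulVec (M : Matrix (Fin n) (Fin n) ℝ) {i : Fin n}
    {x : Fin k → ℝ} (hx : ∀ j, Fin.castLE hk j = i → x j = 0) :
    suoOfHaar hm hk (M * coordReflection i) *ᵥ x = suoOfHaar hm hk M *ᵥ x := by
  ext a
  simp only [mulVec, dotProduct]
  refine Finset.sum_congr rfl fun j _ => ?_
  by_cases hj : Fin.castLE hk j = i
  · simp only [hx j hj, mul_zero]
  · simp [suoOfHaar, coordReflection, hj]

theorem exists_mem_orthogonalGroup_suoOfHaar_mul_eq {R : Matrix (Fin k) (Fin k) ℝ}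
    (hR : R ∈ orthogonalGroup (Fin k) ℝ) :
    ∃ S ∈ orthogonalGroup (Fin n) ℝ, ∀ M, suoOfHaar hm hk (M * S) = suoOfHaar hm hk M * R := by
  obtain ⟨d, rfl⟩ := Nat.exists_eq_add_of_le hk
  refine ⟨(fromBlocks R 0 0 1).submatrix finSumFinEquiv.symm finSumFinEquiv.symm, ?_, fun M => ?_⟩
  · rw [mem_orthogonalGroup_iff] at hR ⊢
    simp [fromBlocks_transpose, fromBlocks_multiply, submatrix_mul_equiv, hR]
  · ext i j
    have hcast (j : Fin k) : Fin.castLE hk j = Fin.castAdd d j := rfl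
    simp [suoOfHaar, hcast, mul_apply, Fin.sum_univ_add, Finset.mul_sum, mul_assoc]

theorem IsSUO.map_mul_right {ν : Measure (Matrix (Fin m) (Fin k) ℝ)} (hν : IsSUO m k ν)
    {R : Matrix (Fin k) (Fin k) ℝ} (hR : R ∈ orthogonalGroup (Fin k) ℝ) :
    ν.map (fun W => W * R) = ν := by
  obtain ⟨μ, hμ, rfl⟩ := hν
  obtain ⟨S, hS, hSR⟩ :=
    exists_mem_orthogonalGroup_suoOfHaar_mul_eq (le_max_right k m) (le_max_left k m) hR
  conv_rhs => rw [← hμ.map_mul_right hS]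
  rw [Measure.map_map (by fun_prop) (by fun_prop), Measure.map_map (by fun_prop) (by fun_prop)]
  simp only [Function.comp_def, hSR]

theorem IsSUO.map_mulVec_eq_of_isHaarSO {ι : Type*} {ν : Measure (Matrix (Fin m) (Fin k) ℝ)}
    (hν : IsSUO m k ν) {μ : Measure (Matrix (Fin (max k m)) (Fin (max k m)) ℝ)}
    (hμ : IsHaarSO (max k m) μ) {i : Fin (max k m)} {v : ι → Fin k → ℝ}
    (hv : ∀ a j, Fin.castLE (le_max_left k m) j = i → v a j = 0) :
    ν.map (fun W a => W *ᵥ v a) =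
      μ.map (fun M a => suoOfHaar (le_max_right k m) (le_max_left k m) M *ᵥ v a) := by
  obtain ⟨μO, hμO, rfl⟩ := hν
  rw [Measure.map_map (by fun_prop) (by fun_prop)]
  refine hμO.map_eq_map_of_isHaarSO hμ (by fun_prop)
    (coordReflection_mem_orthogonalGroup i) (det_coordReflection i) fun M => funext fun a => ?_
  exact suoOfHaar_mul_coordReflection_mulVec _ _ M (hv a)

end SUO

theorem suo_pair_as_so_pair_general {ι : Type*} (m k r : ℕ) (hr : r < max k m)
    (ν : Measure (Matrix (Fin m) (Fin k) ℝ)) (hν : IsSUO m k ν) (z : ι → Fin k → ℝ)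
    (R : Matrix (Fin k) (Fin k) ℝ) (hR : Rᵀ * R = 1)
    (hRz : ∀ a, ∀ i : Fin k, r ≤ (i : ℕ) → (R *ᵥ z a) i = 0)
    (μ : Measure (Matrix (Fin (max k m)) (Fin (max k m)) ℝ)) (hμ : IsHaarSO (max k m) μ) :
    ν.map (fun W a => W *ᵥ z a) =
      μ.map (fun M a => suoOfHaar (le_max_right k m) (le_max_left k m) M *ᵥ R *ᵥ z a) := by
  have hRorth : R ∈ orthogonalGroup (Fin k) ℝ := (mem_orthogonalGroup_iff' _ _).mpr hR
  calc ν.map (fun W a => W *ᵥ z a)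
      = (ν.map (fun W => W * R)).map (fun W a => W *ᵥ z a) := by rw [hν.map_mul_right hRorth]
    _ = ν.map (fun W a => W *ᵥ R *ᵥ z a) := by
        rw [Measure.map_map (by fun_prop) (by fun_prop)]
        simp only [Function.comp_def, mulVec_mulVec]
    _ = _ := hν.map_mulVec_eq_of_isHaarSO hμ (i := ⟨r, hr⟩) fun a j hj =>
        hRz a j (congrArg Fin.val hj).ge

/-- **Lemma.** For `n = max k m ≥ 3` and SUO-distributed `W`, if `R` is orthogonal and
maps `z, z'` into the span of the first two standard basis vectors, with
`(v, v') = (Rz, Rz')`, then `(Wz, Wz')` is distributed as `(Vv, Vv')` where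
`V = √(n/k)·M₀` and `M₀` is the top-left `m × k` submatrix of a Haar-distributed
`M ∈ SO(n)`. -/
theorem suo_pair_as_so_pair (m k : ℕ) (hm : 0 < m) (hk : 0 < k) (hn : 3 ≤ max k m)
    (ν : Measure (Matrix (Fin m) (Fin k) ℝ)) (hν : IsSUO m k ν)
    (z z' : Fin k → ℝ)
    (R : Matrix (Fin k) (Fin k) ℝ) (hR : Rᵀ * R = 1)
    (hRz : ∀ i : Fin k, 2 ≤ (i : ℕ) → R.mulVec z i = 0)
    (hRz' : ∀ i : Fin k, 2 ≤ (i : ℕ) → R.mulVec z' i = 0)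
    (μ : Measure (Matrix (Fin (max k m)) (Fin (max k m)) ℝ))
    (hμ : IsHaarSO (max k m) μ) :
    ν.map (fun W => (W.mulVec z, W.mulVec z')) =
      μ.map (fun M =>
        ((suoOfHaar (le_max_right k m) (le_max_left k m) M).mulVec (R.mulVec z),
         (suoOfHaar (le_max_right k m) (le_max_left k m) M).mulVec (R.mulVec z'))) := by
  have h := suo_pair_as_so_pair_general m k 2 hn ν hν ![z, z'] R hR
    (Fin.forall_fin_two.mpr ⟨hRz, hRz'⟩) μ hμ
  simpa (disch := fun_prop) only [Measure.map_map, Function.comp_def, cons_val_zero,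
    cons_val_one] using congrArg (Measure.map fun p => (p 0, p 1)) h
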